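/- Let V be a finite-dimensional simple U-module with dim V ≥ 3. Order ℂ lexicographically (λ < μ if and only if Re λ < Re μ, or Re λ = Re μ and Im λ < Im μ), let λ₀ be the largest eigenvalue of the operator Z on V in this order, and let v be a non-zero vector with Z·v = λ₀·v. Then X·v ≠ 0. -/

import Mathlib

/-- The lexicographic (strict) order on `ℂ`: compare real parts first, then
imaginary parts. -/
def Complex.lexLt (a b : ℂ) : Prop :=
  a.re < b.re ∨ (a.re = b.re ∧ a.im < b.im)

/-!
Anticommutation relations reflect eigenspaces: if `T * Z + Z * T = c • T`, then `T` maps the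
`μ`-eigenspace of `Z` into the `(c - μ)`-eigenspace. So if `Z v = λ₀ v`, then `X (Y v)` lies in the
eigenspace of `λ₀ + 4`, which is zero because `λ₀ + 4` exceeds the largest eigenvalue. If moreover
`X v = 0`, then `Y (Y v) = X (X v) - Z v = -λ₀ v`, and the span of `v` and `Y v` is a non-zero
submodule of dimension at most two, contradicting simplicity.
-/

section Module

open Module Module.End Submodule

variable {R M : Type*} [CommRing R] [AddCommGroup M] [Module R M]

theorem apply_mem_eigenspace_of_mul_add_mul_eq_smul {T Z : End R M} {c μ : R} {x : M}
    (h : T * Z + Z * T = c • T) (hx : x ∈ eigenspace Z μ) : T x ∈ eigenspace Z (c - μ) := by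
  rw [mem_eigenspace_iff] at hx ⊢
  have hTx : μ • T x + Z (T x) = c • T x := by
    simpa [hx] using LinearMap.congr_fun h x
  rw [sub_smul, eq_sub_iff_add_eq', hTx]

theorem apply_apply_eq_zero_of_not_hasEigenvalue {X Y Z : End R M} {a b μ : R} {x : M}
    (hXZ : X * Z + Z * X = a • X) (hYZ : Y * Z + Z * Y = b • Y)
    (hμ : ¬ HasEigenvalue Z (μ + (a - b))) (hx : x ∈ eigenspace Z μ) : X (Y x) = 0 := by
  have hXYx : X (Y x) ∈ eigenspace Z (a - (b - μ)) :=
    apply_mem_eigenspace_of_mul_add_mul_eq_smul hXZ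
      (apply_mem_eigenspace_of_mul_add_mul_eq_smul hYZ hx)
  rw [show a - (b - μ) = μ + (a - b) by ring] at hXYx
  by_contra hne
  exact hμ (hasEigenvalue_of_hasEigenvector ⟨hXYx, hne⟩)

theorem span_pair_mem_invtSubmodule {T : End R M} {x y : M}
    (hx : T x ∈ span R {x, y}) (hy : T y ∈ span R {x, y}) :
    span R {x, y} ∈ T.invtSubmodule :=
  span_le.mpr (Set.pair_subset hx hy)

theorem rank_span_pair_le [Nontrivial R] (x y : M) : Module.rank R (span R {x, y}) ≤ 2 :=
  calc Module.rank R (span R {x, y}) ≤ Cardinal.mk ({x, y} : Set M) := rank_span_le _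
    _ ≤ Cardinal.mk ({y} : Set M) + 1 := Cardinal.mk_insert_le
    _ = 2 := by rw [Cardinal.mk_singleton, one_add_one_eq_two]

theorem mem_invtSubmodule_of_mul_self_sub_mul_self_eq {X Y Z : End R M} {W : Submodule R M}
    (hXYZ : X * X - Y * Y = Z) (hX : W ∈ X.invtSubmodule) (hY : W ∈ Y.invtSubmodule) :
    W ∈ Z.invtSubmodule := by
  subst hXYZ
  exact fun _ hw ↦ W.sub_mem (hX (hX hw)) (hY (hY hw))

theorem apply_apply_eq_neg_smul_of_apply_eq_zero {X Y Z : End R M} {μ : R} {x : M}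
    (hXYZ : X * X - Y * Y = Z) (hX : X x = 0) (hZ : Z x = μ • x) : Y (Y x) = -(μ • x) := by
  rw [← hZ, ← hXYZ]
  simp [hX]

theorem UF_top_eigenvector_not_killed_by_X_general {X Y Z : End R M} {a b μ : R} {v : M}
    (hXZ : X * Z + Z * X = a • X) (hYZ : Y * Z + Z * Y = b • Y) (hXYZ : X * X - Y * Y = Z)
    (hsimple : ∀ W : Submodule R M, W ∈ X.invtSubmodule → W ∈ Y.invtSubmodule →
      W ∈ Z.invtSubmodule → W = ⊥ ∨ W = ⊤)
    (hrank : 2 < Module.rank R M) (hμ : ¬ HasEigenvalue Z (μ + (a - b)))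
    (hv : HasEigenvector Z μ v) : X v ≠ 0 := by
  intro hXv
  have hXYv : X (Y v) = 0 := apply_apply_eq_zero_of_not_hasEigenvalue hXZ hYZ hμ hv.1
  have hYYv : Y (Y v) = -(μ • v) :=
    apply_apply_eq_neg_smul_of_apply_eq_zero hXYZ hXv hv.apply_eq_smul
  have hv_mem : v ∈ span R {v, Y v} := mem_span_of_mem (by simp)
  have hX : span R {v, Y v} ∈ X.invtSubmodule :=
    span_pair_mem_invtSubmodule (by simp [hXv]) (by simp [hXYv])
  have hY : span R {v, Y v} ∈ Y.invtSubmodule :=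
    span_pair_mem_invtSubmodule (mem_span_of_mem (by simp))
      (hYYv ▸ neg_mem (smul_mem _ _ hv_mem))
  have hZ := mem_invtSubmodule_of_mul_self_sub_mul_self_eq hXYZ hX hY
  rcases hsimple _ hX hY hZ with hbot | htop
  · exact hv.2 (by simpa [hbot] using hv_mem)
  · have : Nontrivial M := nontrivial_of_ne v 0 hv.2
    have : Nontrivial R := Module.nontrivial R M
    have hle : Module.rank R M ≤ 2 := by
      rw [← rank_top, ← htop]
      exact rank_span_pair_le v (Y v)
    exact hle.not_gt hrank

end Module

section LexOrder

open Module Module.End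

theorem not_lexLt_add_left_of_re_pos {z : ℂ} (w : ℂ) (hz : 0 < z.re) :
    ¬ Complex.lexLt (w + z) w := by
  rintro (hre | ⟨hre, -⟩) <;> rw [Complex.add_re] at hre <;> linarith

theorem not_hasEigenvalue_add_of_forall_eq_or_lexLt {V : Type*} [AddCommGroup V] [Module ℂ V]
    {Z : End ℂ V} {lam₀ z : ℂ}
    (hmax : ∀ μ : ℂ, HasEigenvalue Z μ → μ = lam₀ ∨ Complex.lexLt μ lam₀) (hz : 0 < z.re) :
    ¬ HasEigenvalue Z (lam₀ + z) := by
  intro h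
  rcases hmax _ h with heq | hlt
  · have hz_zero : z = 0 := by simpa using heq
    simp [hz_zero] at hz
  · exact not_lexLt_add_left_of_re_pos lam₀ hz hlt

end LexOrder

/-- on a finite-dimensional simple module of dimension at least 3 over
`U = ℂ⟨X,Y,Z⟩/(XZ+ZX−2X, YZ+ZY+2Y, X²−Y²−Z)`, if `λ₀` is the largest eigenvalue
of `Z` for the lexicographic order on `ℂ` and `v` is a corresponding non-zero
eigenvector, then `X v ≠ 0`. -/
theorem UF_top_eigenvector_not_killed_by_X
    {V : Type*} [AddCommGroup V] [Module ℂ V] [FiniteDimensional ℂ V]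
    (X Y Z : Module.End ℂ V)
    (hXZ : X * Z + Z * X = (2 : ℂ) • X)
    (hYZ : Y * Z + Z * Y = (-2 : ℂ) • Y)
    (hXYZ : X * X - Y * Y = Z)
    (hsimple : ∀ W : Submodule ℂ V, (∀ w ∈ W, X w ∈ W) → (∀ w ∈ W, Y w ∈ W) →
      (∀ w ∈ W, Z w ∈ W) → W = ⊥ ∨ W = ⊤)
    (hdim : 3 ≤ Module.finrank ℂ V)
    (lam₀ : ℂ) (hlam₀ : Module.End.HasEigenvalue Z lam₀)
    (hmax : ∀ μ : ℂ, Module.End.HasEigenvalue Z μ → μ = lam₀ ∨ Complex.lexLt μ lam₀)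
    (v : V) (hv : v ≠ 0) (hZv : Z v = lam₀ • v) :
    X v ≠ 0 := by
  have hgap : ¬ Module.End.HasEigenvalue Z (lam₀ + (2 - -2)) :=
    not_hasEigenvalue_add_of_forall_eq_or_lexLt hmax (by norm_num)
  have hrank : 2 < Module.rank ℂ V := by exact_mod_cast Module.lt_rank_of_lt_finrank hdim
  exact UF_top_eigenvector_not_killed_by_X_general hXZ hYZ hXYZ hsimple hrank hgap
    ⟨Module.End.mem_eigenspace_iff.mpr hZv, hv⟩
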